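/- arXiv:2005.01875 — 2 statements merged into one kernel-verified Lean document; each statement's English description precedes it below -/
import Mathlib

section
/- For every k < ω and every finite Souslin measurable colouring c of the set 𝓔_k of all equivalence relations on ω with exactly k equivalence classes, there exists X ∈ 𝓔_∞ (an equivalence relation on ω with infinitely many classes) such that c is constant on 𝓔_k ↾ X, the set of all members of 𝓔_k that are coarsenings of X. -/
open Set

namespace DualRamsey

/-- `F` is a coarsening of `E` (written `F ≤ E` in the paper): every class of `F`
is a union of classes of `E`. -/
def Coarsens {X : Type*} (F E : Setoid X) : Prop := ∀ a b, E.r a b → F.r a b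

/-- The set of equivalence classes of a setoid. -/
def classes {X : Type*} (E : Setoid X) : Set (Set X) := {C | ∃ x, C = {y | E.r x y}}

/-- The set of minimal representatives of the classes of an equivalence relation on ℕ. -/
def minReps (E : Setoid ℕ) : Set ℕ := {n | ∀ m, E.r n m → n ≤ m}

/-- `pRep E k` is `p_k(E)`, the k-th minimal representative in increasing order. -/
noncomputable def pRep (E : Setoid ℕ) (k : ℕ) : ℕ := Nat.nth (· ∈ minReps E) k

/-- `approx n E` is the n-th approximation `r_n(E)`: `E` restricted to `{0,…,p_n(E)-1}`,
identified with its graph. -/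
noncomputable def approx (n : ℕ) (E : Setoid ℕ) : Set (ℕ × ℕ) :=
  {q | q.1 < pRep E n ∧ q.2 < pRep E n ∧ E.r q.1 q.2}

/-- Basic set `[a, E]` relative to a space `S` of equivalence relations. -/
noncomputable def basicSet (S : Set (Setoid ℕ)) (a : Set (ℕ × ℕ)) (E : ↥S) : Set ↥S :=
  {F | Coarsens F.1 E.1 ∧ ∃ n, approx n F.1 = a}

/-- The Ellentuck topology on a space `S` of equivalence relations. -/
noncomputable def ellentuckTop (S : Set (Setoid ℕ)) : TopologicalSpace ↥S :=
  TopologicalSpace.generateFrom {U | ∃ a E, U = basicSet S a E}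

def IsRamsey (S : Set (Setoid ℕ)) (X : Set ↥S) : Prop :=
  ∀ (a : Set (ℕ × ℕ)) (B : ↥S), (basicSet S a B).Nonempty →
    ∃ A ∈ basicSet S a B, basicSet S a A ⊆ X ∨ basicSet S a A ∩ X = ∅

def IsRamseyNull (S : Set (Setoid ℕ)) (X : Set ↥S) : Prop :=
  ∀ (a : Set (ℕ × ℕ)) (B : ↥S), (basicSet S a B).Nonempty →
    ∃ A ∈ basicSet S a B, basicSet S a A ∩ X = ∅

/-- The property of Baire with respect to the Ellentuck topology. -/
noncomputable def HasBP (S : Set (Setoid ℕ)) (X : Set ↥S) : Prop :=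
  ∃ O M : Set ↥S, (ellentuckTop S).IsOpen O ∧ @IsMeagre _ (ellentuckTop S) M ∧
    X = (O \ M) ∪ (M \ O)

/-- The Souslin operation applied to a scheme indexed by finite sequences of naturals. -/
def souslinOp {X : Type*} (A : List ℕ → Set X) : Set X :=
  ⋃ x : ℕ → ℕ, ⋂ n : ℕ, A ((List.range n).map x)

/-- `Y` belongs to the smallest field of sets containing all `t`-open sets and
closed under the Souslin operation. -/
def SouslinMeasurable {X : Type*} (t : TopologicalSpace X) (Y : Set X) : Prop :=
  ∀ 𝒜 : Set (Set X),
    (∀ U, t.IsOpen U → U ∈ 𝒜) →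
    (∀ A ∈ 𝒜, Aᶜ ∈ 𝒜) →
    (∀ A ∈ 𝒜, ∀ B ∈ 𝒜, A ∪ B ∈ 𝒜) →
    (∀ f : List ℕ → Set X, (∀ s, f s ∈ 𝒜) → souslinOp f ∈ 𝒜) →
    Y ∈ 𝒜

/-- The graph of an equivalence relation as a boolean-valued function. -/
noncomputable def graphMap {X : Type*} (E : Setoid X) : X × X → Bool :=
  fun q => @decide (E.r q.1 q.2) (Classical.dec _)

/-- The metrizable topology on a space of equivalence relations, as a subspace of
`2^(X × X)` via graphs. -/
noncomputable def graphTop {X : Type*} (S : Set (Setoid X)) : TopologicalSpace ↥S :=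
  TopologicalSpace.induced (fun E => graphMap E.1) inferInstance



/-- `𝓔_k`: equivalence relations on ℕ with exactly `k` classes. -/
def Ek (k : ℕ) : Set (Setoid ℕ) := {E | (classes E).Finite ∧ (classes E).ncard = k}

/-- `𝓔_∞`: equivalence relations on ℕ with infinitely many classes. -/
def Einf : Set (Setoid ℕ) := {E | (classes E).Infinite}

section Ultra

attribute [local instance] Ultrafilter.mul Ultrafilter.semigroup

open Filter

/-- A compact right-topological semigroup has a minimal element. -/
theorem exists_minimal_elem {M : Type*} [Semigroup M] [TopologicalSpace M] [CompactSpace M]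
    [T2Space M] (hcont : ∀ r : M, Continuous (· * r)) (C : Set M) (hC : IsClosed C)
    (hne : C.Nonempty) (hmul : ∀ x ∈ C, ∀ y ∈ C, x * y ∈ C) :
    ∃ x ∈ C, ∀ z ∈ C, ∃ c ∈ C, x = c * z * x := by
  let S : Set (Set M) :=
    { N | IsClosed N ∧ N.Nonempty ∧ N ⊆ C ∧ ∀ c ∈ C, ∀ x ∈ N, c * x ∈ N }
  obtain ⟨N, -, hN⟩ : ∃ N', N' ⊆ C ∧ Minimal (· ∈ S) N' := by
    refine zorn_superset_nonempty S ?_ C ⟨hC, hne, Subset.rfl, hmul⟩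
    intro c hcs hc hcn
    refine ⟨⋂₀ c, ⟨isClosed_sInter fun t ht => (hcs ht).1, ?_, ?_, ?_⟩, fun s hs =>
      Set.sInter_subset_of_mem hs⟩
    · have := hcn.coe_sort
      have hc' : IsChain (· ⊇ ·) c := hc.symm
      refine IsCompact.nonempty_sInter_of_directed_nonempty_isCompact_isClosed
        hc'.directedOn (fun i hi => (hcs hi).2.1)
        (fun i hi => (hcs hi).1.isCompact) (fun i hi => (hcs hi).1)
    · obtain ⟨t, ht⟩ := hcn
      exact (Set.sInter_subset_of_mem ht).trans (hcs ht).2.2.1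
    · intro a ha x hx t ht
      exact (hcs ht).2.2.2 a ha x (hx t ht)
  obtain ⟨hcl, ⟨x, hx⟩, hsub, hid⟩ := hN.prop
  refine ⟨x, hsub hx, fun z hz => ?_⟩
  have key : (· * (z * x)) '' C = N := by
    apply hN.eq_of_subset
    · refine ⟨(hcont _).isClosedMap _ hC, hne.image _, ?_, ?_⟩
      · rintro _ ⟨c, hc, rfl⟩
        exact hmul _ hc _ (hmul _ hz _ (hsub hx))
      · rintro a ha _ ⟨c, hc, rfl⟩
        exact ⟨a * c, hmul _ ha _ hc, mul_assoc _ _ _⟩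
    · rintro _ ⟨c, hc, rfl⟩
      exact hid _ hc _ (hid _ hz _ hx)
  rw [← key] at hx
  obtain ⟨c, hc, h⟩ := hx
  exact ⟨c, hc, by rw [mul_assoc]; exact h.symm⟩

/-- Ultrafilters concentrating on words with letters below `n`. -/
def UC (n : ℕ) : Set (Ultrafilter (FreeMonoid ℕ)) :=
  {U | ∀ᶠ w in (U : Filter (FreeMonoid ℕ)), ∀ a ∈ w.toList, a < n}

/-- Ultrafilters concentrating on words starting with `n`. -/
def UL (n : ℕ) : Set (Ultrafilter (FreeMonoid ℕ)) :=
  {U | ∀ᶠ w in (U : Filter (FreeMonoid ℕ)), ∃ v : List ℕ, w.toList = n :: v}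

theorem UC_closed (n : ℕ) : IsClosed (UC n) := ultrafilter_isClosed_basic _

theorem UL_closed (n : ℕ) : IsClosed (UL n) := ultrafilter_isClosed_basic _

theorem UC_mul (n : ℕ) {U V : Ultrafilter (FreeMonoid ℕ)} (hU : U ∈ UC n) (hV : V ∈ UC n) :
    U * V ∈ UC n := by
  change ∀ᶠ w in ((U * V : Ultrafilter _) : Filter (FreeMonoid ℕ)), ∀ a ∈ w.toList, a < n
  rw [Ultrafilter.eventually_mul]
  filter_upwards [hU] with a ha
  filter_upwards [hV] with b hb
  intro x hx
  rw [FreeMonoid.toList_mul, List.mem_append] at hx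
  exact hx.elim (ha x) (hb x)

theorem UL_mul (n : ℕ) {U V : Ultrafilter (FreeMonoid ℕ)} (hU : U ∈ UL n) :
    U * V ∈ UL n := by
  change ∀ᶠ w in ((U * V : Ultrafilter _) : Filter (FreeMonoid ℕ)), ∃ v : List ℕ, w.toList = n :: v
  rw [Ultrafilter.eventually_mul]
  filter_upwards [hU] with a ha
  refine Filter.Eventually.of_forall fun b => ?_
  obtain ⟨v, hv⟩ := ha
  exact ⟨v ++ b.toList, by rw [FreeMonoid.toList_mul, hv]; rfl⟩

theorem UC_mono {n m : ℕ} (h : n ≤ m) : UC n ⊆ UC m := by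
  intro U hU
  change ∀ᶠ w in (U : Filter (FreeMonoid ℕ)), ∀ a ∈ w.toList, a < m
  filter_upwards [hU] with w hw a ha
  exact (hw a ha).trans_le h

theorem umap_mul (f : ℕ → ℕ) (U V : Ultrafilter (FreeMonoid ℕ)) :
    (U * V).map (FreeMonoid.map f) = U.map (FreeMonoid.map f) * V.map (FreeMonoid.map f) := by
  apply Ultrafilter.coe_inj.mp
  apply Filter.ext'
  intro p
  rw [Ultrafilter.eventually_mul, Ultrafilter.coe_map, Ultrafilter.coe_map, Ultrafilter.coe_map]
  simp only [Filter.eventually_map]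
  rw [Ultrafilter.eventually_mul]
  simp

theorem ultra_step (n : ℕ) (r : Ultrafilter (FreeMonoid ℕ)) (hr : r ∈ UC (n + 1)) :
    ∃ q : Ultrafilter (FreeMonoid ℕ), q ∈ UC (n + 1) ∧ q ∈ UL n ∧ q * q = q ∧
      (∃ z ∈ UC (n + 1), q = z * r) ∧ ∀ z ∈ UC (n + 1), ∃ c ∈ UC (n + 1), q = c * z * q := by
  obtain ⟨x, hx, hmin⟩ := exists_minimal_elem (M := Ultrafilter (FreeMonoid ℕ))
    Ultrafilter.continuous_mul_left (UC (n + 1)) (UC_closed _) ⟨r, hr⟩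
    (fun x hx y hy => UC_mul _ hx hy)
  have hTc : IsCompact ((· * (x * r)) '' (UC (n + 1) ∩ UL n)) :=
    ((UC_closed _).inter (UL_closed _)).isCompact.image (Ultrafilter.continuous_mul_left _)
  have hne : (UC (n + 1) ∩ UL n).Nonempty := by
    refine ⟨pure (FreeMonoid.of n), ?_, ?_⟩
    · change ∀ a ∈ (FreeMonoid.of n).toList, a < n + 1
      simp
    · change ∃ v : List ℕ, (FreeMonoid.of n).toList = n :: v
      simp
  obtain ⟨q, ⟨V, ⟨hV1, hV2⟩, hq⟩, hqq⟩ := exists_idempotent_in_compact_subsemigroup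
    (M := Ultrafilter (FreeMonoid ℕ)) Ultrafilter.continuous_mul_left _ (hne.image _) hTc (by
      rintro _ ⟨V, ⟨hV1, hV2⟩, rfl⟩ _ ⟨W, ⟨hW1, hW2⟩, rfl⟩
      refine ⟨V * (x * r) * W, ⟨?_, ?_⟩, ?_⟩
      · exact UC_mul _ (UC_mul _ hV1 (UC_mul _ hx hr)) hW1
      · exact UL_mul _ (UL_mul _ hV2)
      · simp only [mul_assoc])
  dsimp only at hq
  refine ⟨q, ?_, ?_, hqq, ⟨V * x, UC_mul _ hV1 hx, ?_⟩, ?_⟩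
  · rw [← hq]; exact UC_mul _ hV1 (UC_mul _ hx hr)
  · rw [← hq]; exact UL_mul _ hV2
  · rw [← hq, mul_assoc]
  · intro z hz
    obtain ⟨c, hc, h⟩ := hmin (z * V) (UC_mul _ hz hV1)
    refine ⟨V * c, UC_mul _ hV1 hc, ?_⟩
    rw [← hq]
    conv_lhs => rw [h]
    simp only [mul_assoc]

theorem ultra_seq : ∃ q : ℕ → Ultrafilter (FreeMonoid ℕ),
    (∀ n, q n ∈ UC (n + 1)) ∧ (∀ n, q n ∈ UL n) ∧
    ∀ n (f ρ : ℕ → ℕ), (∀ i ≤ n + 1, ρ i ≤ n) → (∀ i ≤ n + 1, f (ρ i) = f i) →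
      (q n).map (FreeMonoid.map f) * (q (n + 1)).map (FreeMonoid.map f)
        = (q n).map (FreeMonoid.map f) := by
  choose S h1 h2 h3 h4 h5 using ultra_step
  have h0 : (pure 1 : Ultrafilter (FreeMonoid ℕ)) ∈ UC 1 := by
    change ∀ a ∈ (1 : FreeMonoid ℕ).toList, a < 1
    simp
  let Q : (n : ℕ) → {U : Ultrafilter (FreeMonoid ℕ) // U ∈ UC (n + 1)} := fun n =>
    Nat.rec ⟨S 0 (pure 1) h0, h1 _ _ _⟩
      (fun n q => ⟨S (n + 1) q.1 (UC_mono (Nat.le_succ _) q.2), h1 _ _ _⟩) n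
  have hQs : ∀ n, (Q (n + 1)).1 = S (n + 1) (Q n).1 (UC_mono (Nat.le_succ _) (Q n).2) :=
    fun n => rfl
  have hmin : ∀ n, ∀ z ∈ UC (n + 1), ∃ c ∈ UC (n + 1), (Q n).1 = c * z * (Q n).1 := by
    intro n
    cases n with
    | zero => exact h5 _ _ _
    | succ n => exact h5 _ _ _
  refine ⟨fun n => (Q n).1, fun n => (Q n).2, ?_, ?_⟩
  · intro n
    cases n with
    | zero => exact h2 _ _ _
    | succ n => exact h2 _ _ _
  · intro n f ρ hρ hf
    obtain ⟨z, hz, hqz⟩ : ∃ z ∈ UC (n + 2), (Q (n + 1)).1 = z * (Q n).1 := h4 _ _ _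
    have hid : (Q (n + 1)).1 * (Q (n + 1)).1 = (Q (n + 1)).1 := h3 _ _ _
    dsimp only
    have hz' : z.map (FreeMonoid.map ρ) ∈ UC (n + 1) := by
      change ∀ᶠ w in ((z.map (FreeMonoid.map ρ) : Ultrafilter _) : Filter (FreeMonoid ℕ)), _
      rw [Ultrafilter.coe_map, Filter.eventually_map]
      filter_upwards [hz] with w hw a ha
      rw [FreeMonoid.toList_map, List.mem_map] at ha
      obtain ⟨b, hb, rfl⟩ := ha
      exact Nat.lt_succ_of_le (hρ b (Nat.le_of_lt_succ (hw b hb)))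
    have hzz : (z.map (FreeMonoid.map ρ)).map (FreeMonoid.map f) = z.map (FreeMonoid.map f) := by
      apply Ultrafilter.coe_inj.mp
      rw [Ultrafilter.coe_map, Ultrafilter.coe_map, Ultrafilter.coe_map, Filter.map_map]
      apply Filter.map_congr
      filter_upwards [hz] with w hw
      apply FreeMonoid.toList.injective
      simp only [Function.comp, FreeMonoid.toList_map, List.map_map]
      apply List.map_congr_left
      intro a ha
      exact hf a (Nat.le_of_lt_succ (hw a ha))
    obtain ⟨c, hc, hq⟩ := hmin n _ hz'
    have e1 : (Q n).1.map (FreeMonoid.map f) =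
        c.map (FreeMonoid.map f) * (Q (n + 1)).1.map (FreeMonoid.map f) := by
      conv_lhs => rw [hq]
      rw [umap_mul, umap_mul, hzz, hqz, umap_mul, mul_assoc]
    rw [e1, mul_assoc, ← umap_mul, hid]

end Ultra

section Words

/-- `X` is an infinite word in which the letter `n` first occurs at position `p n`, and the
first occurrences are in increasing order. -/
def IsX (X p : ℕ → ℕ) : Prop := (∀ n, X (p n) = n) ∧ ∀ n i, i < p n → X i < n

/-- The part of `X` before position `n`. -/
def pre (X : ℕ → ℕ) (n : ℕ) : List ℕ := (List.range n).map X

theorem mem_pre {X : ℕ → ℕ} {n a : ℕ} : a ∈ pre X n ↔ ∃ i < n, X i = a := by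
  simp [pre]

theorem fusion (R : ℕ → List ℕ → List ℕ → Prop)
    (h : ∀ n w, (∀ a ∈ w, a < n) → ∃ v : List ℕ, (∀ a ∈ v, a ≤ n) ∧ R n w (w ++ n :: v)) :
    ∃ X p, IsX X p ∧ ∀ n, R n (pre X (p n)) (pre X (p (n + 1))) := by
  choose V hV1 hV2 using h
  let W : (n : ℕ) → {w : List ℕ // ∀ a ∈ w, a < n} := fun n =>
    Nat.rec ⟨[], by simp⟩ (fun n w => ⟨w.1 ++ n :: V n w.1 w.2, by
      intro a ha
      rw [List.mem_append, List.mem_cons] at ha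
      rcases ha with ha | ha | ha
      · exact (w.2 a ha).trans (Nat.lt_succ_self n)
      · rw [ha]; exact Nat.lt_succ_self n
      · exact Nat.lt_succ_of_le (hV1 n w.1 w.2 a ha)⟩) n
  have hW : ∀ n, (W (n + 1)).1 = (W n).1 ++ n :: V n (W n).1 (W n).2 := fun n => rfl
  have hpre : ∀ n m, n ≤ m → (W n).1 <+: (W m).1 := by
    intro n m hnm
    induction m, hnm using Nat.le_induction with
    | base => exact List.prefix_rfl
    | succ m _ ih => exact ih.trans (by rw [hW]; exact List.prefix_append _ _)
  have hlen : ∀ n, n ≤ (W n).1.length := by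
    intro n
    induction n with
    | zero => exact Nat.zero_le _
    | succ n ih => rw [hW]; simp; omega
  let X : ℕ → ℕ := fun i => ((W (i + 1)).1).getD i 0
  have hX : ∀ n i, i < (W n).1.length → X i = ((W n).1).getD i 0 := by
    intro n i hi
    have hi' : i < (W (i + 1)).1.length := hlen (i + 1)
    change ((W (i + 1)).1).getD i 0 = _
    rw [List.getD_eq_getElem _ _ hi, List.getD_eq_getElem _ _ hi']
    rcases le_total n (i + 1) with hle | hle
    · exact ((hpre _ _ hle).getElem hi).symm
    · exact (hpre _ _ hle).getElem hi'
  have hmap : ∀ n, pre X (W n).1.length = (W n).1 := by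
    intro n
    apply List.ext_getElem
    · simp [pre]
    · intro i h1 h2
      simp only [pre, List.getElem_map, List.getElem_range]
      rw [hX n i h2, List.getD_eq_getElem _ _ h2]
  refine ⟨X, fun n => (W n).1.length, ⟨?_, ?_⟩, ?_⟩
  · intro n
    have : (W n).1.length < (W (n + 1)).1.length := by rw [hW]; simp
    rw [hX (n + 1) _ this, List.getD_eq_getElem _ _ this]
    simp [hW]
  · intro n i hi
    rw [hX n i hi, List.getD_eq_getElem _ _ hi]
    exact (W n).2 _ (List.getElem_mem _)
  · intro n
    rw [hmap, hmap, hW]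
    exact hV2 _ _ _

/-- One more than the largest value of `f` on `{0,…,n-1}`. -/
def cnt (f : ℕ → ℕ) (n : ℕ) : ℕ := (Finset.range n).sup (fun i => f i + 1)

/-- Letters of `f` occur for the first time in increasing order, without gaps. -/
def Rigid (f : ℕ → ℕ) : Prop := ∀ i, f i ≤ cnt f i

theorem cnt_le {f : ℕ → ℕ} {n b : ℕ} : cnt f n ≤ b ↔ ∀ i < n, f i < b := by
  simp [cnt, Finset.sup_le_iff]

theorem lt_cnt {f : ℕ → ℕ} {n i : ℕ} (h : i < n) : f i < cnt f n := cnt_le.1 le_rfl i h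

theorem cnt_mono {f : ℕ → ℕ} {n m : ℕ} (h : n ≤ m) : cnt f n ≤ cnt f m :=
  cnt_le.2 fun _ hi => lt_cnt (hi.trans_le h)

theorem cnt_zero (f : ℕ → ℕ) : cnt f 0 = 0 := rfl

theorem cnt_succ (f : ℕ → ℕ) (n : ℕ) : cnt f (n + 1) = max (cnt f n) (f n + 1) := by
  simp [cnt, Finset.range_add_one, max_comm]

theorem Rigid.attained {f : ℕ → ℕ} (hf : Rigid f) : ∀ {n a : ℕ}, a < cnt f n →
    ∃ i < n, f i = a ∧ cnt f i = a := by
  intro n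
  induction n with
  | zero => intro a h; simp [cnt_zero] at h
  | succ n ih =>
    intro a h
    by_cases h' : a < cnt f n
    · obtain ⟨i, hi, h1⟩ := ih h'
      exact ⟨i, by omega, h1⟩
    · rw [cnt_succ] at h
      have h2 := hf n
      have : a < f n + 1 := by
        rcases lt_max_iff.1 h with h | h
        · exact absurd h h'
        · exact h
      exact ⟨n, by omega, by omega, by omega⟩

theorem IsX.p_le {X p : ℕ → ℕ} (h : IsX X p) (i : ℕ) : p (X i) ≤ i := by
  by_contra hc
  exact lt_irrefl _ (h.2 (X i) i (not_le.1 hc))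

theorem IsX.strictMono {X p : ℕ → ℕ} (h : IsX X p) : StrictMono p := by
  apply strictMono_nat_of_lt_succ
  intro n
  rcases lt_trichotomy (p n) (p (n + 1)) with h1 | h1 | h1
  · exact h1
  · have := h.1 n; rw [h1, h.1] at this; omega
  · have := h.2 _ _ h1; rw [h.1] at this; omega

theorem IsX.cnt_comp {X p : ℕ → ℕ} (h : IsX X p) (f : ℕ → ℕ) (n : ℕ) :
    cnt (f ∘ X) (p n) = cnt f n := by
  apply le_antisymm
  · exact cnt_le.2 fun i hi => lt_cnt (h.2 n i hi)
  · refine cnt_le.2 fun i hi => ?_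
    have := lt_cnt (f := f ∘ X) (h.strictMono hi)
    simpa [h.1] using this

theorem IsX.rigid_comp {X p : ℕ → ℕ} (h : IsX X p) {f : ℕ → ℕ} (hf : Rigid f) :
    Rigid (f ∘ X) := by
  intro i
  calc f (X i) ≤ cnt f (X i) := hf _
    _ = cnt (f ∘ X) (p (X i)) := (h.cnt_comp f _).symm
    _ ≤ _ := cnt_mono (h.p_le i)

theorem IsX.comp {X p Y r : ℕ → ℕ} (h : IsX X p) (h' : IsX Y r) : IsX (Y ∘ X) (p ∘ r) := by
  constructor
  · intro n; simp [h.1, h'.1]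
  · intro n i hi
    exact h'.2 n _ (h.2 _ i hi)

theorem isX_id : IsX id id := ⟨fun _ => rfl, fun _ _ h => h⟩

theorem map_pre (f X : ℕ → ℕ) (n : ℕ) : (pre X n).map f = pre (f ∘ X) n := by
  simp [pre]

theorem pre_congr {f g : ℕ → ℕ} {n : ℕ} (h : ∀ i < n, f i = g i) : pre f n = pre g n := by
  apply List.map_congr_left
  intro a ha
  exact h a (List.mem_range.1 ha)

end Words

section Tail

attribute [local instance] Ultrafilter.mul Ultrafilter.semigroup

open Filter

theorem exists_lim {M κ : Type*} [Finite κ] (U : Ultrafilter M) (φ : M → κ) :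
    ∃ k, ∀ᶠ t in (U : Filter M), φ t = k := by
  obtain ⟨k, hk⟩ := Ultrafilter.eq_pure_of_finite (U.map φ)
  refine ⟨k, ?_⟩
  have h : ∀ᶠ t in ((U.map φ : Ultrafilter κ) : Filter κ), t = k := by
    rw [hk, Ultrafilter.coe_pure, eventually_pure]
  rw [Ultrafilter.coe_map, eventually_map] at h
  exact h

theorem tail_step {κ : Type*} [Finite κ] (j : ℕ) (c : List ℕ → κ) :
    ∃ E : ℕ → List ℕ → (ℕ → ℕ) → κ,
      (∀ n w f g, (∀ a ∈ w, a ≤ n) → (∀ i ≤ n, f i = g i) → E n w f = E n w g) ∧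
      ∃ X p, IsX X p ∧ ∀ n f, (∀ i ≤ n, f i ≤ j) →
        c ((pre X (p (n + 1))).map f) = E n (pre X (p n)) f ∧
        (f (n + 1) ≤ j → (∃ i ≤ n, f i = f (n + 1)) →
          E (n + 1) (pre X (p (n + 1))) f = E n (pre X (p n)) f) := by
  obtain ⟨q, hC, hL, habs⟩ := ultra_seq
  have hE : ∀ n (w : List ℕ) (f : ℕ → ℕ), ∃ k,
      ∀ᶠ t in (q n : Filter (FreeMonoid ℕ)), c (w.map f ++ t.toList.map f) = k :=
    fun n w f => exists_lim (q n) _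
  choose E hE using hE
  have hcongr : ∀ n w f g, (∀ a ∈ w, a ≤ n) → (∀ i ≤ n, f i = g i) → E n w f = E n w g := by
    intro n w f g hw hfg
    obtain ⟨t, h1, h2, h3⟩ := ((hE n w f).and ((hE n w g).and (hC n))).exists
    rw [← h1, ← h2]
    congr 2
    · exact List.map_congr_left fun a ha => hfg a (hw a ha)
    · exact List.map_congr_left fun a ha => hfg a (Nat.le_of_lt_succ (h3 a ha))
  refine ⟨E, hcongr, ?_⟩
  let R : ℕ → List ℕ → List ℕ → Prop := fun n w w' => ∀ f : ℕ → ℕ, (∀ i ≤ n, f i ≤ j) →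
        c (w'.map f) = E n w f ∧
        (f (n + 1) ≤ j → (∃ i ≤ n, f i = f (n + 1)) → E (n + 1) w' f = E n w f)
  refine fusion R ?_
  intro n w hw
  let ext : (Fin (n + 2) → Fin (j + 1)) → ℕ → ℕ := fun F i =>
    if h : i < n + 2 then (F ⟨i, h⟩ : ℕ) else 0
  have key : ∀ᶠ t in (q n : Filter (FreeMonoid ℕ)), ∀ F : Fin (n + 2) → Fin (j + 1),
      (∃ i ≤ n, ext F i = ext F (n + 1)) →
        E (n + 1) (w ++ t.toList) (ext F) = E n w (ext F) := by
    rw [eventually_all]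
    intro F
    by_cases hF : ∃ i ≤ n, ext F i = ext F (n + 1)
    swap
    · exact Eventually.of_forall fun t ht => absurd ht hF
    obtain ⟨i0, hi0, hi⟩ := hF
    set f := ext F with hf
    have ha := habs n f (fun i => if i ≤ n then i else i0) (by
        intro i _
        split_ifs <;> assumption) (by
        intro i hin
        split_ifs with h
        · rfl
        · have : i = n + 1 := by omega
          rw [this, hi])
    have h1 : ∀ᶠ t in (((q n).map (FreeMonoid.map f) : Ultrafilter _) : Filter (FreeMonoid ℕ)),
        c (w.map f ++ t.toList) = E n w f := by
      rw [Ultrafilter.coe_map, eventually_map]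
      filter_upwards [hE n w f] with t ht
      rw [FreeMonoid.toList_map, ht]
    rw [← ha, Ultrafilter.eventually_mul] at h1
    simp only [Ultrafilter.coe_map, eventually_map] at h1
    filter_upwards [h1] with t ht _
    obtain ⟨s, hs1, hs2⟩ := (ht.and (hE (n + 1) (w ++ t.toList) f)).exists
    rw [← hs1, ← hs2]
    simp [FreeMonoid.toList_mul, FreeMonoid.toList_map]
  have key2 : ∀ᶠ t in (q n : Filter (FreeMonoid ℕ)), ∀ F : Fin (n + 2) → Fin (j + 1),
      c ((w ++ t.toList).map (ext F)) = E n w (ext F) := by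
    rw [eventually_all]
    intro F
    filter_upwards [hE n w (ext F)] with t ht
    rw [List.map_append, ht]
  obtain ⟨t, ht1, ht2, ht3, v, hv⟩ := (key.and (key2.and ((hC n).and (hL n)))).exists
  rw [hv] at ht1 ht2 ht3
  refine ⟨v, fun a ha => Nat.le_of_lt_succ (ht3 a (List.mem_cons_of_mem _ ha)), ?_⟩
  intro f hf
  let F : Fin (n + 2) → Fin (j + 1) := fun i => ⟨min (f i) j, by omega⟩
  have hw' : ∀ a ∈ w ++ n :: v, a ≤ n := by
    intro a ha
    rcases List.mem_append.1 ha with h | h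
    · exact (hw a h).le
    · exact Nat.le_of_lt_succ (ht3 a h)
  have hext : ∀ i ≤ n + 1, ext F i = min (f i) j := by
    intro i hi
    simp only [ext, F]
    rw [dif_pos (by omega)]
  have hag : ∀ i ≤ n, ext F i = f i := by
    intro i hi
    rw [hext i (by omega)]
    exact min_eq_left (hf i hi)
  have e0 : E n w (ext F) = E n w f := hcongr _ _ _ _ (fun a ha => (hw a ha).le) hag
  constructor
  · rw [← e0, ← ht2 F]
    congr 1
    exact List.map_congr_left fun a ha => (hag a (hw' a ha)).symm
  · rintro h1 ⟨i, hi, h2⟩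
    have e1 : ext F (n + 1) = f (n + 1) := by
      rw [hext _ le_rfl]; exact min_eq_left h1
    rw [← e0, ← ht1 F ⟨i, hi, by rw [hag i hi, e1, h2]⟩]
    apply hcongr
    · intro a ha
      exact (hw' a ha).trans (Nat.le_succ _)
    · intro i hi
      rcases Nat.lt_or_ge n i with h | h
      · have : i = n + 1 := by omega
        rw [this, e1]
      · exact (hag i h).symm

theorem words {κ : Type*} [Finite κ] : ∀ (j : ℕ) (c : List ℕ → κ), ∃ X p, IsX X p ∧
    ∀ f g n m, Rigid f → Rigid g → cnt f n = j → cnt g m = j →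
      c (pre (f ∘ X) (p n)) = c (pre (g ∘ X) (p m)) := by
  intro j
  induction j with
  | zero =>
    intro c
    refine ⟨id, id, isX_id, ?_⟩
    intro f g n m _ _ hn hm
    have h0 : ∀ (f : ℕ → ℕ) n, cnt f n = 0 → n = 0 := by
      intro f n h
      by_contra hne
      have := lt_cnt (f := f) (Nat.pos_of_ne_zero hne)
      omega
    rw [h0 f n hn, h0 g m hm]
    rfl
  | succ j ih =>
    intro c
    obtain ⟨E, hcongr, X, p, hX, hE⟩ := tail_step j c
    let d : List ℕ → κ := fun l => E l.length (pre X (p l.length)) (fun i => l.getD i j)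
    have hpl : ∀ n, ∀ a ∈ pre X (p n), a ≤ n := by
      intro n a ha
      obtain ⟨i, hi, rfl⟩ := mem_pre.1 ha
      exact (hX.2 n i hi).le
    have main : ∀ f, Rigid f → ∀ n, cnt f n = j → f n = j → ∀ t, cnt f (n + t + 1) = j + 1 →
        E (n + t) (pre X (p (n + t))) f = d (pre f n) := by
      intro f hf n hn hfn t
      induction t with
      | zero =>
        intro _
        simp only [d, Nat.add_zero]
        have hl : (pre f n).length = n := by simp [pre]
        rw [hl]
        apply hcongr _ _ _ _ (hpl n)
        intro i hi
        rcases Nat.lt_or_ge i n with h | h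
        · rw [List.getD_eq_getElem _ _ (by rw [hl]; exact h)]
          simp [pre]
        · have : i = n := by omega
          subst this
          rw [List.getD_eq_default _ _ (by rw [hl]), hfn]
      | succ t iht =>
        intro hc
        have h1 : cnt f (n + t + 1) = j + 1 := by
          apply le_antisymm
          · rw [← hc]; exact cnt_mono (by omega)
          · have := lt_cnt (f := f) (show n < n + t + 1 by omega)
            omega
        rw [← iht h1]
        have h2 : f (n + t + 1) < j + 1 := by
          rw [← hc]; exact lt_cnt (by omega)
        obtain ⟨i, hi, h3, -⟩ := hf.attained (h1 ▸ h2)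
        refine (hE (n + t) f ?_).2 (by omega) ⟨i, by omega, h3⟩
        intro i hi
        have := lt_cnt (f := f) (show i < n + t + 1 by omega)
        omega
    have main2 : ∀ f, Rigid f → ∀ n m, cnt f n = j → f n = j → n < m → cnt f m = j + 1 →
        c (pre (f ∘ X) (p m)) = d (pre f n) := by
      intro f hf n m hn hfn hnm hm
      obtain ⟨t, rfl⟩ : ∃ t, m = n + t + 1 := ⟨m - n - 1, by omega⟩
      rw [← main f hf n hn hfn t hm, ← map_pre]
      refine (hE (n + t) f ?_).1
      intro i hi
      have := lt_cnt (f := f) (show i < n + t + 1 by omega)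
      omega
    obtain ⟨Y, r, hY, hd⟩ := ih d
    refine ⟨Y ∘ X, p ∘ r, hX.comp hY, ?_⟩
    have fin : ∀ f m, Rigid f → cnt f m = j + 1 → ∃ n, cnt f n = j ∧
        c (pre (f ∘ (Y ∘ X)) ((p ∘ r) m)) = d (pre (f ∘ Y) (r n)) := by
      intro f m hf hm
      obtain ⟨n, hn, h1, h2⟩ := hf.attained (show j < cnt f m by omega)
      refine ⟨n, h2, ?_⟩
      have := main2 (f ∘ Y) (hY.rigid_comp hf) (r n) (r m) (by rw [hY.cnt_comp, h2])
        (by simp [hY.1, h1]) (hY.strictMono hn) (by rw [hY.cnt_comp, hm])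
      exact this
    intro f g n m hf hg hn hm
    obtain ⟨n', h1, h2⟩ := fin f n hf hn
    obtain ⟨m', h3, h4⟩ := fin g m hg hm
    rw [h2, h4]
    exact hd f g n' m' hf hg h1 h3

end Tail

section Baire

open Filter

theorem meagre_diff {X : Type*} [TopologicalSpace X] {s t : Set X}
    (h : s =ᶠ[residual X] t) : IsMeagre (s \ t) := by
  rw [Filter.eventuallyEq_set] at h
  unfold IsMeagre
  filter_upwards [h] with x hx
  simp only [mem_compl_iff, mem_diff, not_and, not_not]
  exact hx.1

theorem eq_of_meagre_diff {X : Type*} [TopologicalSpace X] {s t : Set X}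
    (h : IsMeagre (s \ t)) (h' : IsMeagre (t \ s)) : s =ᶠ[residual X] t := by
  rw [Filter.eventuallyEq_set]
  unfold IsMeagre at h h'
  filter_upwards [h, h'] with x hx hx'
  simp only [mem_compl_iff, mem_diff, not_and, not_not] at hx hx'
  exact ⟨hx, hx'⟩

theorem exists_hull {X : Type*} [TopologicalSpace X] [SecondCountableTopology X] (S : Set X) :
    ∃ B, BaireMeasurableSet B ∧ IsMeagre (S \ B) ∧
      ∀ C, BaireMeasurableSet C → IsMeagre (S \ C) → IsMeagre (B \ C) := by
  have hb := TopologicalSpace.isBasis_countableBasis X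
  have hbc := TopologicalSpace.countable_countableBasis X
  set b := TopologicalSpace.countableBasis X
  let U : Set X := ⋃ V ∈ {V | V ∈ b ∧ IsMeagre (S ∩ V)}, V
  have hUo : IsOpen U := isOpen_biUnion fun V hV => hb.isOpen hV.1
  refine ⟨Uᶜ, hUo.baireMeasurableSet.compl, ?_, ?_⟩
  · have : S \ Uᶜ ⊆ ⋃ V ∈ {V | V ∈ b ∧ IsMeagre (S ∩ V)}, (S ∩ V) := by
      rintro x ⟨hx, hxU⟩
      have hxU : x ∈ U := by simpa using hxU
      obtain ⟨V, hV, hxV⟩ := mem_iUnion₂.1 hxU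
      exact mem_iUnion₂.2 ⟨V, hV, hx, hxV⟩
    refine IsMeagre.mono this ?_
    exact isMeagre_biUnion (hbc.mono fun V hV => hV.1) fun V hV => hV.2
  · intro C hC hSC
    obtain ⟨O, hO, hOe⟩ := (hUo.baireMeasurableSet.compl.diff hC).residualEq_isOpen
    have hV : ∀ V ∈ b, V ⊆ O → IsMeagre V := by
      intro V hVb hVO
      have h1 : IsMeagre (V \ (Uᶜ \ C)) :=
        (meagre_diff hOe.symm).mono (diff_subset_diff_left hVO)
      have h2 : IsMeagre (S ∩ V) := by
        refine (hSC.union h1).mono ?_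
        rintro x ⟨hxS, hxV⟩
        by_cases hxC : x ∈ C
        · exact Or.inr ⟨hxV, fun h => h.2 hxC⟩
        · exact Or.inl ⟨hxS, hxC⟩
      have h3 : V ⊆ U := fun x hx => mem_iUnion₂.2 ⟨V, ⟨hVb, h2⟩, hx⟩
      refine h1.mono ?_
      intro x hx
      exact ⟨hx, fun h => h.1 (h3 hx)⟩
    have hOm : IsMeagre O := by
      have : O ⊆ ⋃ V ∈ {V | V ∈ b ∧ V ⊆ O}, V := by
        intro x hx
        obtain ⟨V, hVb, hxV, hVO⟩ := hb.exists_subset_of_mem_open hx hO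
        exact mem_iUnion₂.2 ⟨V, ⟨hVb, hVO⟩, hxV⟩
      refine IsMeagre.mono this ?_
      exact isMeagre_biUnion (hbc.mono fun V hV => hV.1) fun V h => hV V h.1 h.2
    refine (hOm.union (meagre_diff hOe)).mono ?_
    intro x hx
    by_cases hxO : x ∈ O
    · exact Or.inl hxO
    · exact Or.inr ⟨hx, hxO⟩

/-- Nikodym: sets with the property of Baire are closed under the Souslin operation. -/
theorem souslin_baire {X : Type*} [TopologicalSpace X] [SecondCountableTopology X]
    (A : List ℕ → Set X) (hA : ∀ s, BaireMeasurableSet (A s)) :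
    BaireMeasurableSet (souslinOp A) := by
  let T : List ℕ → Set X := fun s =>
    {y | ∃ x : ℕ → ℕ, (List.range s.length).map x = s ∧ ∀ n, y ∈ A ((List.range n).map x)}
  have hTA : ∀ s, T s ⊆ A s := by
    rintro s y ⟨x, hx, hy⟩
    rw [← hx]
    exact hy _
  have hTs : ∀ s, T s ⊆ ⋃ i, T (s ++ [i]) := by
    rintro s y ⟨x, hx, hy⟩
    refine mem_iUnion.2 ⟨x s.length, x, ?_, hy⟩
    rw [List.length_append, List.length_singleton, List.range_succ, List.map_append, hx]
    rfl
  have hT0 : souslinOp A = T [] := by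
    ext y
    simp [souslinOp, T]
  choose H hH1 hH2 hH3 using fun s => exists_hull (T s)
  let B : List ℕ → Set X := fun s => H s ∩ A s
  have hB1 : ∀ s, BaireMeasurableSet (B s) := fun s => (hH1 s).inter (hA s)
  have hB2 : ∀ s, IsMeagre (T s \ B s) := fun s => by
    refine (hH2 s).mono ?_
    rintro y ⟨h1, h2⟩
    exact ⟨h1, fun h => h2 ⟨h, hTA s h1⟩⟩
  have hN : ∀ s, IsMeagre (B s \ ⋃ i, B (s ++ [i])) := by
    intro s
    refine IsMeagre.mono (diff_subset_diff_left inter_subset_left)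
      (hH3 s (⋃ i, B (s ++ [i])) (BaireMeasurableSet.iUnion fun i => hB1 _) ?_)
    refine IsMeagre.mono ?_ (isMeagre_iUnion fun i => hB2 (s ++ [i]))
    rintro y ⟨h1, h2⟩
    obtain ⟨i, hi⟩ := mem_iUnion.1 (hTs s h1)
    exact mem_iUnion.2 ⟨i, hi, fun h => h2 (mem_iUnion.2 ⟨i, h⟩)⟩
  refine (hB1 []).congr (eq_of_meagre_diff ?_ ?_)
  · refine IsMeagre.mono ?_ (isMeagre_iUnion hN)
    rintro y ⟨hy0, hyA⟩
    by_contra hyM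
    have step : ∀ s, y ∈ B s → ∃ i, y ∈ B (s ++ [i]) := by
      intro s hs
      by_contra hc
      exact hyM (mem_iUnion.2 ⟨s, hs, fun h => hc (mem_iUnion.1 h)⟩)
    choose! g hg using step
    let t : ℕ → List ℕ := fun n => Nat.rec [] (fun _ s => s ++ [g s]) n
    have ht : ∀ n, t (n + 1) = t n ++ [g (t n)] := fun n => rfl
    have hyt : ∀ n, y ∈ B (t n) := by
      intro n
      induction n with
      | zero => exact hy0
      | succ n ih => rw [ht]; exact hg _ ih
    have hmap : ∀ n, (List.range n).map (fun n => g (t n)) = t n := by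
      intro n
      induction n with
      | zero => rfl
      | succ n ih => rw [List.range_succ, List.map_append, ih, ht]; rfl
    apply hyA
    refine mem_iUnion.2 ⟨fun n => g (t n), mem_iInter.2 fun n => ?_⟩
    rw [hmap]
    exact (hyt n).2
  · rw [hT0]; exact hB2 []

theorem SouslinMeasurable.preimage_baire {X Y : Type*} (t : TopologicalSpace X)
    [TopologicalSpace Y] [SecondCountableTopology Y] (φ : Y → X)
    (hφ : ∀ U, t.IsOpen U → IsOpen (φ ⁻¹' U)) {S : Set X} (hS : SouslinMeasurable t S) :
    BaireMeasurableSet (φ ⁻¹' S) := by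
  refine hS {A | BaireMeasurableSet (φ ⁻¹' A)} ?_ ?_ ?_ ?_
  · intro U hU
    exact (hφ U hU).baireMeasurableSet
  · intro A hA
    exact BaireMeasurableSet.compl hA
  · intro A hA B hB
    exact BaireMeasurableSet.union hA hB
  · intro f hf
    have : φ ⁻¹' (souslinOp f) = souslinOp fun s => φ ⁻¹' (f s) := by
      simp [souslinOp, preimage_iUnion, preimage_iInter]
    change BaireMeasurableSet _
    rw [this]
    exact souslin_baire _ hf

end Baire

section Dense

theorem tasks {ι : Type*} [Finite ι] (n : ℕ) (Q : ι → List ℕ → Prop)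
    (hmono : ∀ t w u, Q t w → Q t (w ++ u))
    (hden : ∀ t w, ∃ u : List ℕ, (∀ a ∈ u, a ≤ n) ∧ Q t (w ++ u)) (w : List ℕ) :
    ∃ u : List ℕ, (∀ a ∈ u, a ≤ n) ∧ ∀ t, Q t (w ++ u) := by
  classical
  have := Fintype.ofFinite ι
  have key : ∀ s : Finset ι, ∃ u : List ℕ, (∀ a ∈ u, a ≤ n) ∧ ∀ t ∈ s, Q t (w ++ u) := by
    intro s
    induction s using Finset.induction_on with
    | empty => exact ⟨[], by simp, by simp⟩
    | insert t s _ ih =>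
      obtain ⟨u, hu, h⟩ := ih
      obtain ⟨v, hv, h'⟩ := hden t (w ++ u)
      refine ⟨u ++ v, ?_, ?_⟩
      · intro a ha
        exact (List.mem_append.1 ha).elim (hu a) (hv a)
      · intro x hx
        rw [← List.append_assoc]
        rcases Finset.mem_insert.1 hx with rfl | hx
        · exact h'
        · exact hmono _ _ _ (h x hx)
  obtain ⟨u, hu, h⟩ := key Finset.univ
  exact ⟨u, hu, fun t => h t (Finset.mem_univ _)⟩

theorem dense_fusion (k : ℕ) (hk : 0 < k) (D : ℕ → List ℕ → Prop)
    (hext : ∀ i s t, D i s → D i (s ++ t))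
    (hden : ∀ i s, (∀ a ∈ s, a < k) → (∀ b < k, b ∈ s) →
      ∃ t : List ℕ, (∀ a ∈ t, a < k) ∧ D i (s ++ t)) :
    ∃ X p, IsX X p ∧ ∀ n, ∀ i ≤ n, ∀ f : ℕ → ℕ, (∀ a ≤ n, f a < k) →
      (∀ b < k, ∃ a ≤ n, f a = b) → D i (pre (f ∘ X) (p (n + 1))) := by
  let R : ℕ → List ℕ → List ℕ → Prop := fun n _ w' => ∀ i ≤ n, ∀ f : ℕ → ℕ,
    (∀ a ≤ n, f a < k) → (∀ b < k, ∃ a ≤ n, f a = b) → D i (w'.map f)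
  obtain ⟨X, p, hX, hR⟩ : ∃ X p, IsX X p ∧ ∀ n, R n (pre X (p n)) (pre X (p (n + 1))) := by
    apply fusion
    intro n w hw
    let ext : (Fin (n + 1) → Fin k) → ℕ → ℕ := fun F i =>
      if h : i < n + 1 then (F ⟨i, h⟩ : ℕ) else 0
    have hlt : ∀ F i, ext F i < k := by
      intro F i
      simp only [ext]
      split_ifs
      · exact (F _).2
      · exact hk
    obtain ⟨u, hu, h⟩ := tasks (ι := Fin (n + 1) × (Fin (n + 1) → Fin k)) n
      (fun t w => (∀ b < k, ∃ a ≤ n, ext t.2 a = b) → D t.1 (w.map (ext t.2)))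
      (by
        intro t w u h h'
        rw [List.map_append]
        exact hext _ _ _ (h h'))
      (by
        rintro ⟨i, F⟩ w
        by_cases hF : ∀ b < k, ∃ a ≤ n, ext F a = b
        swap
        · exact ⟨[], by simp, fun h => absurd h hF⟩
        obtain ⟨t, ht, hD⟩ := hden i ((w ++ List.range (n + 1)).map (ext F))
          (by
            intro a ha
            obtain ⟨b, _, rfl⟩ := List.mem_map.1 ha
            exact hlt F b)
          (by
            intro b hb
            obtain ⟨a, ha, rfl⟩ := hF b hb
            refine List.mem_map.2 ⟨a, ?_, rfl⟩
            rw [List.mem_append, List.mem_range]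
            right; omega)
        choose! σ hσ1 hσ2 using hF
        refine ⟨List.range (n + 1) ++ t.map σ, ?_, ?_⟩
        · intro a ha
          rw [List.mem_append, List.mem_range, List.mem_map] at ha
          rcases ha with ha | ⟨b, hb, rfl⟩
          · omega
          · exact hσ1 b (ht b hb)
        · intro _
          have : (t.map σ).map (ext F) = t := by
            rw [List.map_map]
            conv_rhs => rw [← List.map_id t]
            exact List.map_congr_left fun a ha => hσ2 a (ht a ha)
          rw [← List.append_assoc, List.map_append, this]
          exact hD)
      (w ++ [n])
    refine ⟨u, hu, ?_⟩
    intro i hi f hf1 hf2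
    let F : Fin (n + 1) → Fin k := fun a => ⟨f a, hf1 a (Nat.le_of_lt_succ a.2)⟩
    have hF : ∀ a ≤ n, ext F a = f a := by
      intro a ha
      simp only [ext, F]
      rw [dif_pos (by omega)]
    have := h (⟨i, by omega⟩, F) (by
      intro b hb
      obtain ⟨a, ha, rfl⟩ := hf2 b hb
      exact ⟨a, ha, hF a ha⟩)
    have e : (w ++ [n] ++ u).map (ext F) = (w ++ n :: u).map f := by
      rw [List.append_assoc]
      refine List.map_congr_left fun a ha => hF a ?_
      simp only [List.mem_append, List.cons_append, List.nil_append, List.mem_cons] at ha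
      rcases ha with h | h | h
      · exact (hw a h).le
      · exact h.le
      · exact hu a h
    rw [← e]
    exact this
  refine ⟨X, p, hX, ?_⟩
  intro n i hi f h1 h2
  rw [← map_pre]
  exact hR n i hi f h1 h2

/-- Functions on `ℕ` with range exactly `{0,…,k-1}`. -/
def GG (k : ℕ) : Set (ℕ → ℕ) := {g | range g = Iio k}

theorem mem_GG {k : ℕ} {g : ℕ → ℕ} : g ∈ GG k ↔ (∀ i, g i < k) ∧ ∀ b < k, ∃ i, g i = b := by
  constructor
  · intro h
    have h : range g = Iio k := h
    refine ⟨fun i => ?_, fun b hb => ?_⟩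
    · have : g i ∈ range g := ⟨i, rfl⟩
      rw [h] at this; exact this
    · have : b ∈ range g := by rw [h]; exact hb
      exact this
  · rintro ⟨h1, h2⟩
    refine Set.Subset.antisymm ?_ ?_
    · rintro _ ⟨i, rfl⟩; exact h1 i
    · intro b hb; exact h2 b hb

theorem GG_bound {k : ℕ} {g : ℕ → ℕ} (hg : g ∈ GG k) : ∃ n, ∀ b < k, ∃ a ≤ n, g a = b := by
  have h := (mem_GG.1 hg).2
  choose! σ hσ using h
  refine ⟨(Finset.range k).sup σ, fun b hb => ⟨σ b, ?_, hσ b hb⟩⟩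
  exact Finset.le_sup (f := σ) (Finset.mem_range.2 hb)

theorem IsX.comp_mem {X p : ℕ → ℕ} (h : IsX X p) {k : ℕ} {g : ℕ → ℕ} (hg : g ∈ GG k) :
    g ∘ X ∈ GG k := by
  rw [mem_GG] at hg ⊢
  refine ⟨fun i => hg.1 _, fun b hb => ?_⟩
  obtain ⟨i, hi⟩ := hg.2 b hb
  exact ⟨p i, by simp [h.1, hi]⟩

theorem pre_length (g : ℕ → ℕ) (n : ℕ) : (pre g n).length = n := by simp [pre]

theorem ext_iff (g : ℕ → ℕ) (s : List ℕ) :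
    pre g s.length = s ↔ ∀ i < s.length, g i = s.getD i 0 := by
  constructor
  · intro h i hi
    have : (pre g s.length).getD i 0 = s.getD i 0 := by rw [h]
    rw [← this, List.getD_eq_getElem _ _ (by rw [pre_length]; exact hi)]
    simp [pre]
  · intro h
    apply List.ext_getElem
    · exact pre_length _ _
    · intro i h1 h2
      simp only [pre, List.getElem_map, List.getElem_range]
      rw [h i h2, List.getD_eq_getElem _ _ h2]

theorem ext_append {g : ℕ → ℕ} {s t : List ℕ} (h : pre g (s ++ t).length = s ++ t) :
    pre g s.length = s := by
  rw [ext_iff] at h ⊢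
  intro i hi
  rw [h i (by rw [List.length_append]; omega), List.getD_append _ _ _ _ hi]

theorem getD_mem_GG {k : ℕ} (hk : 0 < k) {s : List ℕ} (h1 : ∀ a ∈ s, a < k)
    (h2 : ∀ b < k, b ∈ s) : (fun i => s.getD i 0) ∈ GG k := by
  rw [mem_GG]
  constructor
  · intro i
    rcases Nat.lt_or_ge i s.length with h | h
    · rw [List.getD_eq_getElem _ _ h]; exact h1 _ (List.getElem_mem _)
    · rw [List.getD_eq_default _ _ h]; exact hk
  · intro b hb
    obtain ⟨i, hi, rfl⟩ := List.getElem_of_mem (h2 b hb)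
    exact ⟨i, List.getD_eq_getElem _ _ hi⟩

theorem open_nbhd {k : ℕ} {U : Set (GG k)} (hU : IsOpen U) {g : GG k} (hg : g ∈ U) :
    ∃ N, ∀ g' : GG k, (∀ j < N, g'.1 j = g.1 j) → g' ∈ U := by
  obtain ⟨V, hV, rfl⟩ := isOpen_induced_iff.1 hU
  obtain ⟨I, u, hu, hsub⟩ := isOpen_pi_iff.1 hV g.1 hg
  refine ⟨I.sup id + 1, fun g' h => ?_⟩
  apply hsub
  intro a ha
  rw [h a (Nat.lt_succ_of_le (Finset.le_sup (f := id) ha))]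
  exact (hu a ha).2

theorem isOpen_cyl {k : ℕ} (N : ℕ) (g : ℕ → ℕ) : IsOpen {g' : GG k | ∀ j < N, g'.1 j = g j} := by
  have : {g' : GG k | ∀ j < N, g'.1 j = g j} =
      ⋂ j ∈ Finset.range N, (fun g' : GG k => g'.1 j) ⁻¹' {g j} := by
    ext g'; simp
  rw [this]
  refine isOpen_biInter_finset fun j _ => ?_
  exact (isOpen_discrete _).preimage ((continuous_apply j).comp continuous_subtype_val)

theorem avoid (k : ℕ) (hk : 0 < k) (S : Set (GG k)) (hS : S ∈ residual (GG k)) :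
    ∃ X p, IsX X p ∧ ∀ g ∈ GG k, ∀ h : g ∘ X ∈ GG k, (⟨g ∘ X, h⟩ : GG k) ∈ S := by
  obtain ⟨𝒮, h1, h2, h3, h4⟩ := mem_residual_iff.1 hS
  obtain ⟨T, hT⟩ := (h3.insert univ).exists_eq_range (insert_nonempty _ _)
  have hTo : ∀ i, IsOpen (T i) ∧ Dense (T i) := by
    intro i
    have : T i ∈ insert univ 𝒮 := by rw [hT]; exact ⟨i, rfl⟩
    rcases this with h | h
    · rw [h]; exact ⟨isOpen_univ, dense_univ⟩
    · exact ⟨h1 _ h, h2 _ h⟩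
  have hTS : ∀ x, (∀ i, x ∈ T i) → x ∈ S := by
    intro x hx
    apply h4
    intro t ht
    have : t ∈ range T := by rw [← hT]; exact Or.inr ht
    obtain ⟨i, rfl⟩ := this
    exact hx i
  obtain ⟨X, p, hX, hD⟩ := dense_fusion k hk
    (fun i s => ∀ g (hg : g ∈ GG k), pre g s.length = s → (⟨g, hg⟩ : GG k) ∈ T i)
    (fun i s t h g hg hst => h g hg (ext_append hst))
    (by
      intro i s hs1 hs2
      have hg0 := getD_mem_GG hk hs1 hs2
      obtain ⟨g1, hg1, hg1T⟩ := (hTo i).2.inter_open_nonempty _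
        (isOpen_cyl (k := k) s.length (fun i => s.getD i 0)) ⟨⟨_, hg0⟩, fun j _ => rfl⟩
      obtain ⟨N, hN⟩ := open_nbhd (hTo i).1 hg1T
      have hg1' : pre g1.1 s.length = s := (ext_iff _ _).2 hg1
      have hst : s ++ (List.range N).map (fun j => g1.1 (s.length + j)) =
          pre g1.1 (s.length + N) := by
        conv_lhs => rw [← hg1']
        rw [pre_length]
        simp [pre, List.range_add]
      refine ⟨(List.range N).map (fun j => g1.1 (s.length + j)), ?_, ?_⟩
      · intro a ha
        obtain ⟨j, _, rfl⟩ := List.mem_map.1 ha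
        exact (mem_GG.1 g1.2).1 _
      · rw [hst]
        intro g hg hgs
        apply hN
        intro j hj
        rw [pre_length] at hgs
        have h5 : (pre g (s.length + N)).getD j 0 = (pre g1.1 (s.length + N)).getD j 0 := by
          rw [hgs]
        rw [List.getD_eq_getElem _ _ (by rw [pre_length]; omega),
          List.getD_eq_getElem _ _ (by rw [pre_length]; omega)] at h5
        simpa [pre] using h5)
  refine ⟨X, p, hX, fun g hg h => hTS _ fun i => ?_⟩
  obtain ⟨n, hn⟩ := GG_bound hg
  refine hD (max n i) i (le_max_right _ _) g (fun a _ => (mem_GG.1 hg).1 a) ?_ (g ∘ X) h ?_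
  · intro b hb
    obtain ⟨a, ha, h⟩ := hn b hb
    exact ⟨a, ha.trans (le_max_left _ _), h⟩
  · rw [pre_length]

theorem decide_fast {κ : Type*} (k : ℕ) (hk : 0 < k) (C : (ℕ → ℕ) → κ)
    (hloc : ∀ g ∈ GG k, ∃ N, ∀ g' ∈ GG k, (∀ j < N, g' j = g j) → C g' = C g) :
    ∃ X p, IsX X p ∧ ∀ n, ∀ g ∈ GG k, ∀ g' ∈ GG k, (∀ a ≤ n, g a = g' a) →
      (∀ b < k, ∃ a ≤ n, g a = b) → C (g ∘ X) = C (g' ∘ X) := by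
  obtain ⟨X, p, hX, hD⟩ := dense_fusion k hk
    (fun _ s => ∀ g ∈ GG k, ∀ g' ∈ GG k, pre g s.length = s → pre g' s.length = s → C g = C g')
    (fun i s t h g hg g' hg' hst hst' => h g hg g' hg' (ext_append hst) (ext_append hst'))
    (by
      intro i s hs1 hs2
      have hg0 := getD_mem_GG hk hs1 hs2
      obtain ⟨N, hN⟩ := hloc _ hg0
      refine ⟨List.replicate N 0, ?_, ?_⟩
      · intro a ha
        rw [List.eq_of_mem_replicate ha]; exact hk
      · have key : ∀ g ∈ GG k, pre g (s ++ List.replicate N 0).length = s ++ List.replicate N 0 →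
            C g = C (fun i => s.getD i 0) := by
          intro g hg h
          apply hN g hg
          intro j hj
          rw [ext_iff] at h
          rw [h j (by rw [List.length_append, List.length_replicate]; omega)]
          rcases Nat.lt_or_ge j s.length with h | h
          · rw [List.getD_append _ _ _ _ h]
          · rw [List.getD_append_right _ _ _ _ h, List.getD_eq_default _ _ h]
            simp only [List.getD_eq_getElem?_getD, List.getElem?_replicate]
            split_ifs <;> rfl
        intro g hg g' hg' h h'
        rw [key g hg h, key g' hg' h'])
  refine ⟨X, p, hX, fun n g hg g' hg' hag hn => ?_⟩
  refine hD n n le_rfl g (fun a _ => (mem_GG.1 hg).1 a) hn _ (hX.comp_mem hg) _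
    (hX.comp_mem hg') ?_ ?_
  · rw [pre_length]
  · rw [pre_length]
    apply pre_congr
    intro i hi
    exact (hag _ (Nat.le_of_lt_succ (hX.2 _ i hi))).symm

end Dense

section Conv

theorem classes_ker (f : ℕ → ℕ) :
    classes (Setoid.ker f) = (fun a => f ⁻¹' {a}) '' range f := by
  ext C
  constructor
  · rintro ⟨x, rfl⟩
    refine ⟨f x, ⟨x, rfl⟩, ?_⟩
    ext y
    exact ⟨fun h => Eq.symm h, fun h => Eq.symm h⟩
  · rintro ⟨_, ⟨x, rfl⟩, rfl⟩
    refine ⟨x, ?_⟩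
    ext y
    exact ⟨fun h => Eq.symm h, fun h => Eq.symm h⟩

theorem injOn_fib (f : ℕ → ℕ) : InjOn (fun a => f ⁻¹' {a}) (range f) := by
  rintro _ ⟨x, rfl⟩ b _ h
  have : x ∈ f ⁻¹' {f x} := rfl
  have h' : f ⁻¹' {f x} = f ⁻¹' {b} := h
  rw [h'] at this
  exact this

theorem ker_mem_Ek {k : ℕ} {f : ℕ → ℕ} :
    Setoid.ker f ∈ Ek k ↔ (range f).Finite ∧ (range f).ncard = k := by
  change (classes (Setoid.ker f)).Finite ∧ (classes (Setoid.ker f)).ncard = k ↔ _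
  rw [classes_ker, Set.finite_image_iff (injOn_fib f), Set.ncard_image_of_injOn (injOn_fib f)]

theorem GG_ker {k : ℕ} {f : ℕ → ℕ} (hf : f ∈ GG k) : Setoid.ker f ∈ Ek k := by
  rw [ker_mem_Ek]
  have hf : range f = Iio k := hf
  rw [hf]
  refine ⟨Set.finite_Iio k, ?_⟩
  rw [← Finset.coe_Iio, Set.ncard_coe_finset, Nat.card_Iio]

theorem IsX.ker_mem {X p : ℕ → ℕ} (h : IsX X p) : Setoid.ker X ∈ Einf := by
  change (classes (Setoid.ker X)).Infinite
  rw [classes_ker, Set.infinite_image_iff (injOn_fib X)]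
  have : range X = univ := Set.range_eq_univ.2 fun n => ⟨p n, h.1 n⟩
  rw [this]
  exact Set.infinite_univ

theorem exists_rigid (E : Setoid ℕ) : ∃ f, Rigid f ∧ E = Setoid.ker f := by
  classical
  have hne : ∀ i, ∃ j, E.r j i := fun i => ⟨i, E.refl i⟩
  let r : ℕ → ℕ := fun i => Nat.find (hne i)
  have hr : ∀ i, E.r (r i) i := fun i => Nat.find_spec (hne i)
  have hrle : ∀ i, r i ≤ i := fun i => Nat.find_min' (hne i) (E.refl i)
  have hrE : ∀ i j, E.r i j → r i = r j := by
    intro i j h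
    apply le_antisymm
    · exact Nat.find_min' (hne i) (E.trans (hr j) (E.symm h))
    · exact Nat.find_min' (hne j) (E.trans (hr i) h)
  have hrr : ∀ i, r (r i) = r i := fun i => hrE _ _ (hr i)
  let P : ℕ → Prop := fun j => r j = j
  let f : ℕ → ℕ := fun i => Nat.count P (r i)
  have hcnt : ∀ n, Nat.count P n ≤ cnt f n := by
    intro n
    induction n with
    | zero => simp
    | succ n ih =>
      rw [cnt_succ, Nat.count_succ]
      split_ifs with h
      · have h' : r n = n := h
        have : f n = Nat.count P n := by simp only [f, h']
        rw [this]
        exact le_max_right _ _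
      · exact ih.trans (le_max_left _ _)
  refine ⟨f, fun i => (hcnt _).trans (cnt_mono (hrle i)), ?_⟩
  ext i j
  rw [Setoid.ker_def]
  constructor
  · intro h
    simp only [f, hrE i j h]
  · intro h
    have h2 : r i = r j := Nat.count_injective (p := P) (hrr i) (hrr j) h
    have h3 : E.r (r j) i := h2 ▸ hr i
    exact E.trans (E.symm h3) (hr j)

theorem Rigid.mem_GG {k : ℕ} {f : ℕ → ℕ} (hf : Rigid f) (h : Setoid.ker f ∈ Ek k) : f ∈ GG k := by
  rw [ker_mem_Ek] at h
  obtain ⟨h1, h2⟩ := h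
  have hseg : ∀ a ∈ range f, ∀ b ≤ a, b ∈ range f := by
    rintro _ ⟨i, rfl⟩ b hb
    obtain ⟨j, _, hj, _⟩ := hf.attained (n := i + 1) (a := b)
      (lt_of_le_of_lt hb (lt_cnt (Nat.lt_succ_self i)))
    exact ⟨j, hj⟩
  obtain ⟨K, hK⟩ : ∃ K, f ∈ GG K := by
    obtain ⟨M, hM⟩ := h1.bddAbove
    have hex : ∃ K, K ∉ range f := ⟨M + 1, fun h => absurd (hM h) (by omega)⟩
    classical
    refine ⟨Nat.find hex, DualRamsey.mem_GG.2 ⟨fun i => ?_, fun b hb => ?_⟩⟩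
    · by_contra hcon
      exact Nat.find_spec hex (hseg _ ⟨i, rfl⟩ _ (not_lt.1 hcon))
    · exact not_not.1 (Nat.find_min hex hb)
  have := (ker_mem_Ek.1 (GG_ker hK)).2
  rw [h2] at this
  rw [this]; exact hK

theorem factor {k : ℕ} {X p : ℕ → ℕ} (h : IsX X p) {Y : Setoid ℕ} (hY : Y ∈ Ek k)
    (hYX : Coarsens Y (Setoid.ker X)) :
    ∃ g, Rigid g ∧ g ∈ GG k ∧ Y = Setoid.ker (g ∘ X) := by
  obtain ⟨f, hf, rfl⟩ := exists_rigid Y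
  have hfG := hf.mem_GG hY
  have hfX : (f ∘ p) ∘ X = f := by
    funext i
    exact hYX (p (X i)) i (h.1 _)
  refine ⟨f ∘ p, ?_, ?_, by rw [hfX]⟩
  · intro n
    have := hf (p n)
    rw [← h.cnt_comp, hfX]
    exact this
  · rw [DualRamsey.mem_GG] at hfG ⊢
    refine ⟨fun i => hfG.1 _, fun b hb => ?_⟩
    obtain ⟨i, hi⟩ := hfG.2 b hb
    exact ⟨X i, by rw [← hi]; exact congrFun hfX i⟩

/-- The map from functions to equivalence relations. -/
def kerMap (k : ℕ) (g : GG k) : Ek k := ⟨Setoid.ker g.1, GG_ker g.2⟩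

theorem kerMap_cont (k : ℕ) (U : Set (Ek k)) (hU : (graphTop (Ek k)).IsOpen U) :
    IsOpen (kerMap k ⁻¹' U) := by
  obtain ⟨V, hV, rfl⟩ := hU
  have : Continuous fun g : GG k => graphMap (kerMap k g).1 := by
    refine continuous_pi fun q => ?_
    have h1 : Continuous fun g : GG k => (g.1 q.1, g.1 q.2) :=
      ((continuous_apply q.1).comp continuous_subtype_val).prodMk
        ((continuous_apply q.2).comp continuous_subtype_val)
    have h2 : Continuous fun z : ℕ × ℕ => decide (z.1 = z.2) := continuous_of_discreteTopology
    convert h2.comp h1 using 2 with g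
    simp only [graphMap, Function.comp]
    congr
  exact hV.preimage this

theorem main_pos (k' m : ℕ) (c : ↥(Ek (k' + 1)) → Fin m)
    (hc : ∀ i : Fin m, SouslinMeasurable (graphTop (Ek (k' + 1))) {E | c E = i}) :
    ∃ X p, IsX X p ∧ ∀ g g', Rigid g → Rigid g' →
      ∀ (h : g ∘ X ∈ GG (k' + 1)) (h' : g' ∘ X ∈ GG (k' + 1)),
      g ∈ GG (k' + 1) → g' ∈ GG (k' + 1) →
      c (kerMap _ ⟨g ∘ X, h⟩) = c (kerMap _ ⟨g' ∘ X, h'⟩) := by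
  classical
  have hk : 0 < k' + 1 := Nat.succ_pos _
  have hO : ∀ i : Fin m, ∃ O : Set (GG (k' + 1)), IsOpen O ∧
      (kerMap (k' + 1) ⁻¹' {E | c E = i}) =ᶠ[residual _] O := by
    intro i
    have hb := SouslinMeasurable.preimage_baire _ (kerMap (k' + 1)) (kerMap_cont _) (hc i)
    obtain ⟨O, h1, h2⟩ := hb.residualEq_isOpen
    exact ⟨O, h1, h2⟩
  choose O hOo hOe using hO
  have hS : {g : GG (k' + 1) | ∀ i, (c (kerMap _ g) = i ↔ g ∈ O i)} ∈ residual (GG (k' + 1)) := by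
    refine Filter.eventually_all.2 fun i => ?_
    filter_upwards [hOe i] with g hg
    exact iff_of_eq hg
  obtain ⟨X1, p1, hX1, h1⟩ := avoid (k' + 1) hk _ hS
  let C : (ℕ → ℕ) → Option (Fin m) := fun g =>
    if h : g ∈ GG (k' + 1) then some (c (kerMap _ ⟨g, h⟩)) else none
  have hC : ∀ g (h : g ∈ GG (k' + 1)), C g = some (c (kerMap _ ⟨g, h⟩)) := by
    intro g h
    simp only [C]
    rw [dif_pos h]
  obtain ⟨X2, p2, hX2, h2⟩ := decide_fast (k' + 1) hk (fun g => C (g ∘ X1)) (by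
    intro g hg
    have hgX := hX1.comp_mem hg
    have hgO := (h1 g hg hgX (c (kerMap _ ⟨g ∘ X1, hgX⟩))).1 rfl
    obtain ⟨N, hN⟩ := open_nbhd (hOo _) hgO
    refine ⟨(Finset.range N).sup X1 + 1, fun g' hg' hag => ?_⟩
    have hgX' := hX1.comp_mem hg'
    have := hN ⟨g' ∘ X1, hgX'⟩ (by
      intro j hj
      exact hag _ (Nat.lt_succ_of_le (Finset.le_sup (f := X1) (Finset.mem_range.2 hj))))
    have := (h1 g' hg' hgX' _).2 this
    change C (g' ∘ X1) = C (g ∘ X1)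
    rw [hC _ hgX, hC _ hgX', this])
  let d : List ℕ → Option (Fin m) := fun l => C (((fun i => l.getD i k') ∘ X2) ∘ X1)
  have hd : ∀ f n, Rigid f → f ∈ GG (k' + 1) → cnt f n = k' → f n = k' →
      C ((f ∘ X2) ∘ X1) = d (pre f n) := by
    intro f n hf hfG hcn hfn
    have hag : ∀ a ≤ n, f a = (pre f n).getD a k' := by
      intro a ha
      rcases Nat.lt_or_ge a n with h | h
      · rw [List.getD_eq_getElem _ _ (by rw [pre_length]; exact h)]
        simp [pre]
      · rw [List.getD_eq_default _ _ (by rw [pre_length]; exact h)]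
        rw [le_antisymm ha h]; exact hfn
    have hhit : ∀ b < k' + 1, ∃ a ≤ n, f a = b := by
      intro b hb
      rcases Nat.lt_succ_iff_lt_or_eq.1 hb with h | h
      · obtain ⟨i, hi, hi', _⟩ := hf.attained (n := n) (a := b) (by rw [hcn]; exact h)
        exact ⟨i, hi.le, hi'⟩
      · exact ⟨n, le_rfl, hfn.trans h.symm⟩
    refine h2 n f hfG (fun i => (pre f n).getD i k') ?_ hag hhit
    rw [mem_GG]
    constructor
    · intro i
      rcases Nat.lt_or_ge i n with h | h
      · have := hag i h.le
        change (pre f n).getD i k' < _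
        rw [← this]
        exact (mem_GG.1 hfG).1 i
      · change (pre f n).getD i k' < _
        rw [List.getD_eq_default _ _ (by rw [pre_length]; exact h)]
        exact Nat.lt_succ_self _
    · intro b hb
      obtain ⟨a, ha, h⟩ := hhit b hb
      exact ⟨a, (hag a ha).symm.trans h⟩
  obtain ⟨X3, p3, hX3, h3⟩ := words k' d
  refine ⟨X3 ∘ (X2 ∘ X1), _, (hX1.comp hX2).comp hX3, ?_⟩
  intro g g' hg hg' h h' hG hG'
  have key : ∀ g, Rigid g → g ∈ GG (k' + 1) → ∃ n, cnt g n = k' ∧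
      C (g ∘ (X3 ∘ (X2 ∘ X1))) = d (pre (g ∘ X3) (p3 n)) := by
    intro g hg hG
    obtain ⟨i, hi⟩ := (mem_GG.1 hG).2 k' (Nat.lt_succ_self _)
    obtain ⟨n, _, hn, hn'⟩ := hg.attained (n := i + 1) (a := k') (by
      have := lt_cnt (f := g) (Nat.lt_succ_self i)
      rw [hi] at this; exact this)
    refine ⟨n, hn', ?_⟩
    refine hd (g ∘ X3) (p3 n) (hX3.rigid_comp hg) (hX3.comp_mem hG) ?_ ?_
    · rw [hX3.cnt_comp, hn']
    · simp [hX3.1, hn]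
  obtain ⟨n, hn, e⟩ := key g hg hG
  obtain ⟨n', hn', e'⟩ := key g' hg' hG'
  have := h3 g g' n n' hg hg' hn hn'
  rw [← e, ← e', hC _ h, hC _ h'] at this
  exact Option.some.inj this

end Conv

/-- **Dual Ramsey theorem** (Carlson–Simpson; Souslin measurable form).
For every `k < ω` and every finite Souslin measurable colouring `c` of `𝓔_k`
(with the topology inherited from `2^(ω×ω)`), there is `X ∈ 𝓔_∞` such that `c` is
constant on `𝓔_k ↾ X`, the set of members of `𝓔_k` that are coarsenings of `X`. -/
theorem dualRamsey (k m : ℕ) (c : ↥(Ek k) → Fin m)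
    (hc : ∀ i : Fin m, SouslinMeasurable (graphTop (Ek k)) {E | c E = i}) :
    ∃ X ∈ Einf, ∀ Y Z : ↥(Ek k),
      Coarsens Y.1 X → Coarsens Z.1 X → c Y = c Z := by
  rcases k with _ | k'
  · refine ⟨Setoid.ker id, isX_id.ker_mem, fun Y => ?_⟩
    exfalso
    have hY := Y.2
    have h1 : (classes Y.1).Finite := hY.1
    have h2 : (classes Y.1).ncard = 0 := hY.2
    rw [Set.ncard_eq_zero h1] at h2
    have : {y | Y.1.r 0 y} ∈ classes Y.1 := ⟨0, rfl⟩
    rw [h2] at this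
    exact this
  · obtain ⟨X, p, hX, h⟩ := main_pos k' m c hc
    refine ⟨Setoid.ker X, hX.ker_mem, ?_⟩
    rintro ⟨Y, hY⟩ ⟨Z, hZ⟩ hYX hZX
    obtain ⟨g, hg, hG, rfl⟩ := factor hX hY hYX
    obtain ⟨g', hg', hG', rfl⟩ := factor hX hZ hZX
    exact h g g' hg hg' (hX.comp_mem hG) (hX.comp_mem hG') hG hG'

end DualRamsey
end

section
/- (Left-variable Hales–Jewett theorem.) Let L be a finite alphabet. For every finite colouring of W_L there exist a variable-free word w_0 ∈ W_L and an infinite sequence X = (x_n)_{n<ω} of left-variable words such that the translate w_0⌢[X]_L = {w_0⌢x_{n_0}[λ_0]⌢…⌢x_{n_k}[λ_k] : k < ω, n_0 < … < n_k < ω, λ_0,…,λ_k ∈ L} is monochromatic. -/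
namespace DualRamsey

/-- Variable words over alphabet `L` are words over `Option L`, where `none` plays the
role of the variable `v`. `substW x lam` is `x[λ]`: replace every occurrence of the
variable by `lam`. -/
def substW {L : Type*} (x : List (Option L)) (lam : L) : List L :=
  x.map (fun o => o.getD lam)

/-- A left-variable word: a variable word whose first letter is the variable. -/
def IsLeftVar {L : Type*} (x : List (Option L)) : Prop := x.head? = some none

section Abstract

attribute [local instance] Ultrafilter.mul Ultrafilter.semigroup

theorem ultra_map_mul {S T : Type} [Semigroup S] [Semigroup T] (f : S →ₙ* T)
    (U V : Ultrafilter S) : (U * V).map f = U.map f * V.map f := by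
  apply Ultrafilter.coe_injective
  apply Filter.ext
  intro A
  have h1 := Ultrafilter.eventually_mul U V (fun m => f m ∈ A)
  have h2 := Ultrafilter.eventually_mul (U.map f) (V.map f) (fun m => m ∈ A)
  have h3 : (A ∈ ((U * V).map f : Ultrafilter T)) ↔ ∀ᶠ m in (U * V : Ultrafilter S), f m ∈ A :=
    Iff.rfl
  have h4 : (∀ᶠ m in (U.map f : Ultrafilter T), ∀ᶠ m' in (V.map f : Ultrafilter T), m * m' ∈ A)
      ↔ ∀ᶠ m in (U : Filter S), ∀ᶠ m' in (V : Filter S), f m * f m' ∈ A := Iff.rfl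
  change (A ∈ ((U * V).map f : Ultrafilter T)) ↔ ∀ᶠ m in (U.map f * V.map f : Ultrafilter T), m ∈ A
  rw [h3, h1, h2, h4]
  simp only [map_mul]

/-- A minimal closed left ideal of a compact right topological semigroup. -/
theorem exists_min_ideal {M : Type} [Semigroup M] [Nonempty M] [TopologicalSpace M]
    [CompactSpace M] [T2Space M] (hc : ∀ r : M, Continuous (· * r)) :
    ∃ I : Set M, IsClosed I ∧ I.Nonempty ∧ (∀ p, ∀ q ∈ I, p * q ∈ I) ∧
      ∀ q ∈ I, ∀ w ∈ I, ∃ r, w = r * q := by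
  let C : Set (Set M) := {I | IsClosed I ∧ I.Nonempty ∧ ∀ p, ∀ q ∈ I, p * q ∈ I}
  obtain ⟨I, hI⟩ : ∃ I, Minimal (· ∈ C) I := by
    apply zorn_superset
    intro D hD hch
    rcases D.eq_empty_or_nonempty with rfl | hne
    · exact ⟨Set.univ, ⟨isClosed_univ, Set.univ_nonempty, fun _ _ _ => trivial⟩, by simp⟩
    refine ⟨⋂₀ D, ⟨isClosed_sInter fun t ht => (hD ht).1, ?_, ?_⟩,
      fun s hs => Set.sInter_subset_of_mem hs⟩
    · have : Nonempty D := hne.to_subtype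
      apply IsCompact.nonempty_sInter_of_directed_nonempty_isCompact_isClosed
      · intro s hs t ht
        rcases hch.total hs ht with h | h
        · exact ⟨s, hs, subset_rfl, h⟩
        · exact ⟨t, ht, h, subset_rfl⟩
      · exact fun s hs => (hD hs).2.1
      · exact fun s hs => (hD hs).1.isCompact
      · exact fun s hs => (hD hs).1
    · intro p q hq t ht
      exact (hD ht).2.2 p q (hq t ht)
  obtain ⟨⟨h1, h2, h3⟩, hmin⟩ := hI
  refine ⟨I, h1, h2, h3, fun q hq w hw => ?_⟩
  have hJ : Set.range (· * q) ∈ C := by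
    refine ⟨(isCompact_range (hc q)).isClosed, Set.range_nonempty _, ?_⟩
    rintro p _ ⟨r, rfl⟩
    exact ⟨p * r, mul_assoc _ _ _⟩
  have := hmin hJ (by rintro _ ⟨r, rfl⟩; exact h3 r q hq) hw
  obtain ⟨r, hr⟩ := this
  exact ⟨r, hr.symm⟩

theorem abstract_ultra {S T L : Type} [Semigroup S] [Semigroup T] [Nonempty T]
    (e : T →ₙ* S) (σ : L → S →ₙ* T) (he : ∀ l t, σ l (e t) = t)
    (V : Set S) (hV : V.Nonempty) (hVr : ∀ x ∈ V, ∀ y, x * y ∈ V) :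
    ∃ (w : Ultrafilter T) (v : Ultrafilter S), V ∈ v ∧ (∀ l, w * v.map (σ l) = w) ∧
      ∀ l l', v.map (σ l) * v.map (σ l') = v.map (σ l) := by
  obtain ⟨I, hIc, hIn, hIl, hIm⟩ :=
    exists_min_ideal (M := Ultrafilter T) Ultrafilter.continuous_mul_left
  obtain ⟨w, hwI, hw⟩ := exists_idempotent_in_compact_subsemigroup
    Ultrafilter.continuous_mul_left I hIn hIc.isCompact (fun x _ y hy => hIl x y hy)
  have key : ∀ p ∈ I, ∀ q ∈ I, q * q = q → p * q = p := by
    intro p hp q hq hqq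
    obtain ⟨r, hr⟩ := hIm q hq p hp
    rw [hr, mul_assoc, hqq]
  let Vs : Set (Ultrafilter S) := {p | V ∈ p}
  have hVs : IsCompact Vs := (ultrafilter_isClosed_basic V).isCompact
  have hVsr : ∀ p ∈ Vs, ∀ q, p * q ∈ Vs := by
    intro p hp q
    have := (Ultrafilter.eventually_mul p q (fun m => m ∈ V)).2 (by
      filter_upwards [hp] with x hx
      exact Filter.Eventually.of_forall fun y => hVr x hx y)
    exact this
  let N : Set (Ultrafilter S) := (· * w.map e) '' Vs
  obtain ⟨v, ⟨v', hv', hvv⟩, hv⟩ := exists_idempotent_in_compact_subsemigroup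
    Ultrafilter.continuous_mul_left N
    (by
      obtain ⟨x, hx⟩ := hV
      exact ⟨_, pure x, hx, rfl⟩)
    (hVs.image (Ultrafilter.continuous_mul_left _))
    (by
      rintro _ ⟨a, ha, rfl⟩ _ ⟨b, hb, rfl⟩
      refine ⟨a * w.map e * b, hVsr _ (hVsr _ ha _) _, ?_⟩
      simp only [mul_assoc])
  have hmap : ∀ l, (w.map e).map (σ l) = w := by
    intro l
    rw [Ultrafilter.map_map]
    have : (σ l ∘ e : T → T) = id := funext fun t => he l t
    rw [this, Ultrafilter.map_id]
  have hI : ∀ l, v.map (σ l) ∈ I := by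
    intro l
    rw [← hvv]
    change (v' * w.map e).map (σ l) ∈ I
    rw [ultra_map_mul, hmap]
    exact hIl _ _ hwI
  have hid : ∀ l, v.map (σ l) * v.map (σ l) = v.map (σ l) := by
    intro l
    rw [← ultra_map_mul, hv]
  refine ⟨w, v, ?_, fun l => key _ hwI _ (hI l) (hid l),
    fun l l' => key _ (hI l) _ (hI l') (hid l')⟩
  rw [← hvv]
  exact hVsr _ hv' _

theorem abstract_seq {S T L : Type} [Finite L] [Semigroup S] [Semigroup T] [Nonempty T]
    (e : T →ₙ* S) (σ : L → S →ₙ* T) (he : ∀ l t, σ l (e t) = t)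
    (V : Set S) (hV : V.Nonempty) (hVr : ∀ x ∈ V, ∀ y, x * y ∈ V)
    (m : ℕ) (c : T → Fin m) :
    ∃ (w₀ : T) (X : ℕ → S) (i : Fin m) (F : ℕ → Set T), Monotone F ∧ w₀ ∈ F 0 ∧
      (∀ n, X n ∈ V) ∧ (∀ n, ∀ a ∈ F n, ∀ l, a * σ l (X n) ∈ F (n + 1)) ∧
      ∀ n, ∀ a ∈ F n, c a = i := by
  obtain ⟨w, v, hvV, hwv, hvv⟩ := abstract_ultra e σ he V hV hVr
  obtain ⟨i, hi⟩ : ∃ i, ∀ᶠ a in (w : Filter T), c a = i :=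
    Ultrafilter.eventually_exists_iff.1 (Filter.Eventually.of_forall fun a => ⟨c a, rfl⟩)
  let B : Set T := {a | c a = i ∧ ∀ l, ∀ᶠ y in (v : Filter S), c (a * σ l y) = i}
  have hBw : ∀ᶠ a in (w : Filter T), a ∈ B := by
    refine hi.and (Filter.eventually_all.2 fun l => ?_)
    have h := hi
    rw [← hwv l] at h
    exact (Ultrafilter.eventually_mul w (v.map (σ l)) (fun a => c a = i)).1 h
  have hB : ∀ a ∈ B, ∀ᶠ y in (v : Filter S), ∀ l, a * σ l y ∈ B := by
    intro a ha
    refine Filter.eventually_all.2 fun l => (ha.2 l).and (Filter.eventually_all.2 fun l' => ?_)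
    have h : ∀ᶠ z in (v.map (σ l) : Ultrafilter T), c (a * z) = i := ha.2 l
    rw [← hvv l l'] at h
    have h2 := (Ultrafilter.eventually_mul (v.map (σ l)) (v.map (σ l'))
      (fun z => c (a * z) = i)).1 h
    have h3 : ∀ᶠ y in (v : Filter S), ∀ᶠ z in (v : Filter S), c (a * (σ l y * σ l' z)) = i := h2
    simpa only [mul_assoc] using h3
  obtain ⟨w₀, hw₀⟩ := hBw.exists
  have step : ∀ F : {F : Set T // F.Finite ∧ F ⊆ B}, ∃ x : S, x ∈ V ∧
      ∀ a ∈ F.1, ∀ l, a * σ l x ∈ B := by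
    rintro ⟨F, hF, hFB⟩
    have h1 : ∀ᶠ y in (v : Filter S), ∀ a ∈ F, ∀ l, a * σ l y ∈ B :=
      (Filter.eventually_all_finite hF).2 fun a ha => hB a (hFB ha)
    have h2 : ∀ᶠ y in (v : Filter S), y ∈ V := hvV
    exact (h2.and h1).exists
  choose x hxV hx using step
  let next : {F : Set T // F.Finite ∧ F ⊆ B} → {F : Set T // F.Finite ∧ F ⊆ B} := fun F =>
    ⟨F.1 ∪ (fun q : T × L => q.1 * σ q.2 (x F)) '' (F.1 ×ˢ Set.univ),
      F.2.1.union ((F.2.1.prod Set.finite_univ).image _), by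
        rintro a (ha | ⟨⟨b, l⟩, ⟨hb, -⟩, rfl⟩)
        · exact F.2.2 ha
        · exact hx F b hb l⟩
  let G : ℕ → {F : Set T // F.Finite ∧ F ⊆ B} := fun n =>
    Nat.rec ⟨{w₀}, Set.finite_singleton _, by simpa using hw₀⟩ (fun _ F => next F) n
  refine ⟨w₀, fun n => x (G n), i, fun n => (G n).1, monotone_nat_of_le_succ ?_, ?_,
    fun n => hxV _, ?_, fun n a ha => ((G n).2.2 ha).1⟩
  · intro n a ha
    exact Or.inl ha
  · exact Set.mem_singleton _
  · intro n a ha l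
    exact Or.inr ⟨(a, l), ⟨ha, trivial⟩, rfl⟩

end Abstract

/-- **Left-variable Hales–Jewett theorem.** For a finite alphabet `L` and any finite
colouring of the set `W_L` of words over `L`, there are a variable-free word `w₀` and an
infinite sequence `X = (x_n)` of left-variable words such that the translate
`w₀⌢[X]_L = {w₀⌢x_{n₀}[λ₀]⌢…⌢x_{n_k}[λ_k] : k < ω, n₀ < … < n_k, λ_i ∈ L}`
is monochromatic. -/
theorem leftVariableHalesJewett (L : Type) [Finite L] (m : ℕ) (c : List L → Fin m) :
    ∃ (w₀ : List L) (X : ℕ → List (Option L)) (i : Fin m),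
      (∀ n, IsLeftVar (X n)) ∧
      ∀ (k : ℕ) (ns : Fin (k + 1) → ℕ) (lam : Fin (k + 1) → L), StrictMono ns →
        c (w₀ ++ (List.ofFn fun j => substW (X (ns j)) (lam j)).flatten) = i := by
  let iS : Semigroup (List (Option L)) := { mul := fun a b => a ++ b, mul_assoc := fun a b c => List.append_assoc a b c }
  let iT : Semigroup (List L) := { mul := fun a b => a ++ b, mul_assoc := fun a b c => List.append_assoc a b c }
  obtain ⟨w₀, X, i, F, hmono, hw₀, hXV, hstep, hF⟩ :=
    abstract_seq (S := List (Option L)) (T := List L) (L := L)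
      ⟨fun t => t.map some, fun a b => List.map_append⟩
      (fun l => ⟨fun x => substW x l, fun a b => List.map_append⟩)
      (fun l t => by
        change (t.map some).map _ = t
        rw [List.map_map]
        exact List.map_id t)
      {x | IsLeftVar x} ⟨[none], rfl⟩
      (fun x hx y => by
        change (x ++ y).head? = some none
        have hx' : x.head? = some none := hx
        rw [List.head?_append, hx']
        rfl)
      m c
  refine ⟨w₀, X, i, hXV, ?_⟩
  have main : ∀ (k : ℕ) (ns : Fin (k + 1) → ℕ) (lam : Fin (k + 1) → L), StrictMono ns →
      w₀ ++ (List.ofFn fun j => substW (X (ns j)) (lam j)).flatten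
        ∈ F (ns (Fin.last k) + 1) := by
    intro k
    induction k with
    | zero =>
      intro ns lam _
      have h3 : w₀ ++ substW (X (ns 0)) (lam 0) ∈ F (ns 0 + 1) :=
        hstep (ns 0) w₀ (hmono (Nat.zero_le _) hw₀) (lam 0)
      simpa using h3
    | succ k ih =>
      intro ns lam hns
      have h1 := ih (fun j => ns j.castSucc) (fun j => lam j.castSucc)
        (fun a b hab => hns (Fin.castSucc_lt_castSucc_iff.2 hab))
      have h2 : ns (Fin.last k).castSucc + 1 ≤ ns (Fin.last (k + 1)) :=
        hns (Fin.castSucc_lt_last _)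
      have h3 := hstep _ _ (hmono h2 h1) (lam (Fin.last (k + 1)))
      rw [List.ofFn_succ_last, List.flatten_append, List.flatten_singleton, ← List.append_assoc]
      exact h3
  exact fun k ns lam hns => hF _ _ (main k ns lam hns)

end DualRamsey
end
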